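/- Suppose the Lie conformal algebra A decomposes, as an 𝔽[∂]-module, as A = T ⊕ (𝔽[∂] ⊗ U), where T is the torsion of A and 𝔽[∂] ⊗ U is a complementary free submodule. Then for every k ≥ 1, ψ^k(Γ̃^k(A,M)) = C̄^k(A,M); hence ψ^k induces a bijective 𝔽-linear map Γ^k(A,M) ≅ C̄^k(A,M). -/

import Mathlib

namespace LCC

/-! ### Index utilities -/

/-- Skip one index: the increasing enumeration of `{0,…,k} \ {i}`. -/
def skip1 (i r : ℕ) : ℕ := if r < i then r else r + 1

/-- Skip two indices `i < j`: the increasing enumeration of `{0,…,k+1} \ {i,j}`. -/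
def skip2 (i j r : ℕ) : ℕ := if r < i then r else if r + 1 < j then r + 1 else r + 2

/-- Remove the `i`-th entry of a tuple. -/
def rm1 {α : Type*} {k : ℕ} (i : ℕ) (a : Fin (k+1) → α) : Fin k → α :=
  fun r => a ⟨skip1 i r.1, by have := r.2; unfold skip1; split <;> omega⟩

/-- Remove the `i`-th and `j`-th entries (for `i < j`) of a tuple. -/
def rm2 {α : Type*} {k : ℕ} (i j : ℕ) (a : Fin (k+2) → α) : Fin k → α :=
  fun r => a ⟨skip2 i j r.1, by
    have := r.2; unfold skip2; split
    · omega
    · split <;> omega⟩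

/-- Total weight of a multi-index. -/
def wt {k : ℕ} (ν : Fin k → ℕ) : ℕ := ∑ r, ν r

/-- The multinomial coefficient `(|m| + s)! / (∏ mᵣ! · s!)`. -/
def mnom {K : ℕ} (m : Fin K → ℕ) (s : ℕ) : ℕ :=
  (wt m + s).factorial / ((∏ r, (m r).factorial) * s.factorial)

variable (F : Type*) [Field F]

/-- A Lie conformal algebra over `F`: an `F[∂]`-module `A` (given by the linear
endomorphism `D`), together with a `λ`-bracket recorded through its coefficients:
`[a_λ b] = ∑ₙ (br a b n) λⁿ`, satisfying sesquilinearity, skew-symmetry and the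
Jacobi identity (all written in terms of coefficients of the `λ`-expansions). -/
structure LCA (A : Type*) [AddCommGroup A] [Module F A] where
  D : A →ₗ[F] A
  br : A →ₗ[F] A →ₗ[F] (ℕ → A)
  br_fin : ∀ a b, (Function.support (br a b)).Finite
  sesq_left_zero : ∀ a b, br (D a) b 0 = 0
  sesq_left : ∀ a b n, br (D a) b (n+1) = - br a b n
  sesq_right : ∀ a b n, br a (D b) n
      = D (br a b n) + (if n = 0 then 0 else br a b (n-1))
  skew : ∀ a b m, br a b m
      = - ∑ᶠ n, ((-1 : F)^n * (n.choose m : F)) • ((D ^ (n - m)) (br b a n))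
  jacobi : ∀ a b c m n,
      br a (br b c n) m - br b (br a c m) n
        = ∑ j ∈ Finset.range (m+1), (((n+j).choose j : F)) • br (br a b (m-j)) c (n+j)

/-- A module over a Lie conformal algebra: an `F[∂]`-module `M` with a `λ`-action
of `A`, given through the coefficients `a_λ v = ∑ₙ (act a v n) λⁿ`, satisfying
sesquilinearity and the Jacobi identity. -/
structure LCAMod {A : Type*} [AddCommGroup A] [Module F A] (L : LCA F A)
    (M : Type*) [AddCommGroup M] [Module F M] where
  D : M →ₗ[F] M
  act : A →ₗ[F] M →ₗ[F] (ℕ → M)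
  act_fin : ∀ a m, (Function.support (act a m)).Finite
  sesq_left_zero : ∀ a m, act (L.D a) m 0 = 0
  sesq_left : ∀ a m n, act (L.D a) m (n+1) = - act a m n
  sesq_right : ∀ a m n, act a (D m) n
      = D (act a m n) + (if n = 0 then 0 else act a m (n-1))
  jacobi : ∀ a b v p q,
      act a (act b v q) p - act b (act a v p) q
        = ∑ j ∈ Finset.range (p+1), (((q+j).choose j : F)) • act (L.br a b (p-j)) v (q+j)

variable {F}
variable {A M : Type*} [AddCommGroup A] [Module F A] [AddCommGroup M] [Module F M]

/-- Torsion elements of the `F[∂]`-module `A`. -/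
def IsTor (L : LCA F A) (x : A) : Prop :=
  ∃ p : Polynomial F, p ≠ 0 ∧ Polynomial.aeval L.D p x = 0

/-- `A` decomposes, as an `F[∂]`-module, into the direct sum of its torsion and
a free complementary submodule `F[∂] ⊗ U`. -/
def Decomposes (L : LCA F A) : Prop :=
  ∃ U : Submodule F A, Function.Bijective
    (fun p : {x : A // IsTor L x} × (ℕ →₀ U) =>
      (p.1 : A) + p.2.sum (fun n u => (L.D ^ n) (u : A)))

variable {L : LCA F A}

/-- The condition for a coefficient family
`γ : A^{⊗ k} → F[λ₁,…,λ_k] ⊗ M` (recorded via the coefficients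
`γ a ν` of `λ^ν`) to be a basic `k`-cochain: `F`-multilinearity, polynomiality,
sesquilinearity (A1) and skew-symmetry (A2). -/
structure IsGamma (R : LCAMod F L M) (k : ℕ)
    (γ : (Fin k → A) → (Fin k → ℕ) → M) : Prop where
  map_add : ∀ (a : Fin k → A) (i : Fin k) (x y : A),
    γ (Function.update a i (x + y)) = γ (Function.update a i x) + γ (Function.update a i y)
  map_smul : ∀ (a : Fin k → A) (i : Fin k) (r : F) (x : A),
    γ (Function.update a i (r • x)) = r • γ (Function.update a i x)
  fin : ∀ a, (Function.support (γ a)).Finite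
  sesq : ∀ (a : Fin k → A) (i : Fin k) (x : A) (ν : Fin k → ℕ),
    γ (Function.update a i (L.D x)) ν
      = (if ν i = 0 then 0 else - γ (Function.update a i x) (Function.update ν i (ν i - 1)))
  skew : ∀ (a : Fin k → A) (ν : Fin k → ℕ) (σ : Equiv.Perm (Fin k)),
    γ (a ∘ σ) (ν ∘ σ) = ((Equiv.Perm.sign σ : ℤˣ) : ℤ) • γ a ν

/-- The action of `∂` on basic cochains: `(∂γ) = (∂^M + λ₁ + ⋯ + λ_k) ∘ γ`,
in terms of coefficients. -/
def GammaD (R : LCAMod F L M) {k : ℕ} (γ : (Fin k → A) → (Fin k → ℕ) → M) :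
    (Fin k → A) → (Fin k → ℕ) → M :=
  fun a ν => R.D (γ a ν)
    + ∑ i : Fin k, (if ν i = 0 then 0 else γ a (Function.update ν i (ν i - 1)))

/-- Substitution of the auxiliary variable `μ` by
`λ† = −λ₁ − ⋯ − λ_K − ∂^M` (with `∂^M` moved to the left) in a polynomial
`q` in `λ₁,…,λ_K, μ`, recorded through its coefficients `q ρ n` of `λ^ρ μ^n`.
The result is the coefficient of `λ^ν`. -/
noncomputable def substDag {K : ℕ} (DM : M →ₗ[F] M)
    (q : (Fin K → ℕ) → ℕ → M) (ν : Fin K → ℕ) : M :=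
  ∑ ρ ∈ Finset.Iic ν, ∑ᶠ s : ℕ,
    (((-1 : F)^(wt (fun r => ν r - ρ r) + s)) * (mnom (fun r => ν r - ρ r) s : F)) •
      ((DM ^ s) (q ρ (wt (fun r => ν r - ρ r) + s)))

/-- The condition for a coefficient family
`c : A^{⊗(k+1)} → F[λ₁,…,λ_k] ⊗ M` to be a `(k+1)`-`λ`-bracket
(an element of `C^{k+1}(A,M)`), i.e. conditions B1, B2, B3 of the paper,
written in terms of the coefficients `c a ν` of `λ^ν`. -/
structure IsCBr (R : LCAMod F L M) (k : ℕ)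
    (c : (Fin (k+1) → A) → (Fin k → ℕ) → M) : Prop where
  map_add : ∀ (a : Fin (k+1) → A) (i : Fin (k+1)) (x y : A),
    c (Function.update a i (x + y)) = c (Function.update a i x) + c (Function.update a i y)
  map_smul : ∀ (a : Fin (k+1) → A) (i : Fin (k+1)) (r : F) (x : A),
    c (Function.update a i (r • x)) = r • c (Function.update a i x)
  fin : ∀ a, (Function.support (c a)).Finite
  sesq₁ : ∀ (a : Fin (k+1) → A) (i : Fin k) (x : A) (ν : Fin k → ℕ),
    c (Function.update a i.castSucc (L.D x)) ν
      = (if ν i = 0 then 0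
         else - c (Function.update a i.castSucc x) (Function.update ν i (ν i - 1)))
  sesq₂ : ∀ (a : Fin (k+1) → A) (x : A) (ν : Fin k → ℕ),
    c (Function.update a (Fin.last k) (L.D x)) ν
      = R.D (c (Function.update a (Fin.last k) x) ν)
        + ∑ i : Fin k, (if ν i = 0 then 0
            else c (Function.update a (Fin.last k) x) (Function.update ν i (ν i - 1)))
  skew : ∀ (a : Fin (k+1) → A) (ν : Fin k → ℕ) (σ : Equiv.Perm (Fin (k+1))),
    c a ν = ((Equiv.Perm.sign σ : ℤˣ) : ℤ) • substDag R.D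
      (fun ρ n =>
        if (Fin.snoc ρ n : Fin (k+1) → ℕ) (σ (Fin.last k)) = 0 then
          c (a ∘ σ) (fun i : Fin k => (Fin.snoc ρ n : Fin (k+1) → ℕ) (σ i.castSucc))
        else 0) ν

/-- The subspace `C̄`: poly-`λ`-brackets vanishing whenever one of the arguments is
a torsion element of `A`. -/
def VanishOnTorsion (L : LCA F A) {k : ℕ}
    (c : (Fin (k+1) → A) → (Fin k → ℕ) → M) : Prop :=
  ∀ a ν, (∃ i, IsTor L (a i)) → c a ν = 0

/-- The differential `d : C⁰ = M/∂M → C¹`, `(d∫m)(a) = a_{−∂^M} m`. -/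
noncomputable def dZero (R : LCAMod F L M) (m : M) :
    (Fin 1 → A) → (Fin 0 → ℕ) → M :=
  fun a _ => ∑ᶠ n, ((-1 : F)^n) • ((R.D ^ n) (R.act (a 0) m n))

/-- The second term of the differential `d` of the complex of
poly-`λ`-brackets (the double sum over `i < j` in the paper's formula). -/
noncomputable def dPair (L : LCA F A) (R : LCAMod F L M) :
    ∀ {k : ℕ}, ((Fin (k+1) → A) → (Fin k → ℕ) → M) →
      (Fin (k+2) → A) → (Fin (k+1) → ℕ) → M
  | 0, _, _, _ => 0
  | (s+1), c, a, ν =>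
    ∑ i : Fin (s+2), ∑ j : Fin (s+2),
      if i < j then
        ((-1 : F)^(s + i.1 + j.1 + 1)) •
          ∑ p ∈ Finset.range (ν i + 1),
            substDag R.D
              (fun ρ n =>
                if ρ i = 0 ∧ ρ j = 0 then
                  c (Fin.snoc (Fin.snoc (rm2 i.1 j.1 (Fin.init a)) (a (Fin.last (s+2))))
                      (L.br (a i.castSucc) (a j.castSucc) p))
                    (Fin.snoc (rm2 i.1 j.1 ρ) n)
                else 0)
              (Function.update ν i (ν i - p))
      else 0

/-- The differential `d` on the complex `C^•(A,M)` of poly-`λ`-brackets,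
written in terms of coefficients (formula (1.8) of the paper). Here `c` is a
`(k+1)`-`λ`-bracket and `dRaw c` is a `(k+2)`-`λ`-bracket. -/
noncomputable def dRaw (L : LCA F A) (R : LCAMod F L M) {k : ℕ}
    (c : (Fin (k+1) → A) → (Fin k → ℕ) → M) :
    (Fin (k+2) → A) → (Fin (k+1) → ℕ) → M :=
  fun a ν =>
    (∑ i : Fin (k+1), ((-1 : F)^i.1) •
        R.act (a i.castSucc) (c (rm1 i.1 a) (rm1 i.1 ν)) (ν i))
    + dPair L R c a ν
    + ((-1 : F)^(k+1)) • substDag R.D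
        (fun ρ n =>
          if ρ (Fin.last k) = 0 then
            R.act (a (Fin.last (k+1))) (c (Fin.init a) (Fin.init ρ)) n
          else 0) ν
    + ∑ i : Fin (k+1), ((-1 : F)^(i.1+1)) •
        c (Fin.snoc (rm1 i.1 (Fin.init a)) (L.br (a i.castSucc) (a (Fin.last (k+1))) (ν i)))
          (rm1 i.1 ν)

/-- The second term of the differential `δ` of the basic complex
`Γ̃^•(A,M)` (the double sum over `i < j`). -/
noncomputable def deltaPair (L : LCA F A) (R : LCAMod F L M) :
    ∀ {k : ℕ}, ((Fin k → A) → (Fin k → ℕ) → M) →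
      (Fin (k+1) → A) → (Fin (k+1) → ℕ) → M
  | 0, _, _, _ => 0
  | (s+1), γ, a, ν =>
    ∑ i : Fin (s+2), ∑ j : Fin (s+2),
      if i < j then
        ((-1 : F)^(s + i.1 + j.1)) •
          ∑ p ∈ Finset.range (ν i + 1),
            ((((ν i - p) + ν j).choose (ν i - p) : F)) •
              γ (Fin.snoc (rm2 i.1 j.1 a) (L.br (a i) (a j) p))
                (Fin.snoc (rm2 i.1 j.1 ν) ((ν i - p) + ν j))
      else 0

/-- The differential `δ` of the basic Lie conformal algebra cohomology complex
`Γ̃^•(A,M)`, written in terms of coefficients of the `λ`-expansions. -/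
noncomputable def deltaRaw (L : LCA F A) (R : LCAMod F L M) {k : ℕ}
    (γ : (Fin k → A) → (Fin k → ℕ) → M) :
    (Fin (k+1) → A) → (Fin (k+1) → ℕ) → M :=
  fun a ν =>
    (∑ i : Fin (k+1), ((-1 : F)^i.1) •
        R.act (a i) (γ (rm1 i.1 a) (rm1 i.1 ν)) (ν i))
    + deltaPair L R γ a ν

/-- The map `ψ^{k+1} : Γ̃^{k+1}(A,M) → C^{k+1}(A,M)`,
`{a₁ λ₁ ⋯ a_k λ_k a_{k+1}}_{ψ(γ)} = γ_{λ₁,…,λ_k,λ†}(a₁,…,a_{k+1})`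
where `λ† = −λ₁ − ⋯ − λ_k − ∂^M` (with `∂^M` moved to the left). -/
noncomputable def psiRaw (R : LCAMod F L M) {k : ℕ}
    (γ : (Fin (k+1) → A) → (Fin (k+1) → ℕ) → M) :
    (Fin (k+1) → A) → (Fin k → ℕ) → M :=
  fun a ν => substDag R.D (fun ρ n => γ a (Fin.snoc ρ n)) ν

/-- The map `χ` on "polynomial duals": given
`φ : Hom(F[λ₁,…,λ_K], M)` (recorded through its values `φ ν` on monomials),
`chiMap DM φ` is `φ ∘ (substitution λ_{K+1} ↦ −λ₁ − ⋯ − λ_K + ∂^M)`,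
with `∂^M` moved to the left. -/
noncomputable def chiMap {K : ℕ} (DM : M →ₗ[F] M) (φ : (Fin K → ℕ) → M) :
    (Fin (K+1) → ℕ) → M :=
  fun ν =>
    ∑ m ∈ Finset.Iic (fun _ : Fin K => ν (Fin.last K)),
      if wt m ≤ ν (Fin.last K) then
        (((-1 : F)^(wt m)) * (mnom m (ν (Fin.last K) - wt m) : F)) •
          ((DM ^ (ν (Fin.last K) - wt m)) (φ (fun r => Fin.init ν r + m r)))
      else 0

section Product

variable (F) {N : Type*} [CommRing N] [Algebra F N]

/-- The exterior multiplication of basic cochains, in coefficient form. -/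
noncomputable def wedge {h k : ℕ}
    (α : (Fin h → A) → (Fin h → ℕ) → N) (β : (Fin k → A) → (Fin k → ℕ) → N) :
    (Fin (h+k) → A) → (Fin (h+k) → ℕ) → N :=
  fun a ν =>
    ((h.factorial * k.factorial : F))⁻¹ •
      ∑ σ : Equiv.Perm (Fin (h+k)),
        ((Equiv.Perm.sign σ : ℤˣ) : ℤ) •
          (α (fun i => a (σ (Fin.castAdd k i))) (fun i => ν (σ (Fin.castAdd k i))) *
           β (fun i => a (σ (Fin.natAdd h i))) (fun i => ν (σ (Fin.natAdd h i))))

/-- Contraction of a basic cochain by (a generator of) a basic `h`-chain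
`b ⊗ φ ∈ A^{⊗h} ⊗ Hom(F[λ₁,…,λ_h], N)`. -/
noncomputable def iotaG {h k : ℕ} (b : Fin h → A) (φ : (Fin h → ℕ) → N)
    (γ : (Fin (h + k) → A) → (Fin (h + k) → ℕ) → N) :
    (Fin k → A) → (Fin k → ℕ) → N :=
  fun a ν => ∑ᶠ ρ : Fin h → ℕ, φ ρ * γ (Fin.append b a) (Fin.append ρ ν)

/-- The action of `∂` on (generators of) the space of basic `h`-chains:
`∂(a ⊗ φ) = a ⊗ ((−λ₁^* − ⋯ − λ_h^* + ∂)φ)`. -/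
def chainD (R : LCAMod F L N) {h : ℕ} (φ : (Fin h → ℕ) → N) : (Fin h → ℕ) → N :=
  fun ρ => R.D (φ ρ) - ∑ i : Fin h, φ (Function.update ρ i (ρ i + 1))

/-- Contraction by a basic 1-chain `a₀ ⊗ m(x)`, where `m(x) = ∑ m_k x^k` is recorded
by its coefficient function `m : ℕ → N` (formula (3.23) of the paper, using the
pairing `⟨x^p, λ^q⟩ = q! δ_{p,q}`). -/
noncomputable def iota1 {k : ℕ} (a₀ : A) (m : ℕ → N)
    (γ : (Fin (k+1) → A) → (Fin (k+1) → ℕ) → N) : (Fin k → A) → (Fin k → ℕ) → N :=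
  fun a ν => ∑ᶠ q : ℕ, (q.factorial : F) • (m q * γ (Fin.cons a₀ a) (Fin.cons q ν))

/-- The Lie derivative `L_ξ = δ ∘ ι_ξ + ι_ξ ∘ δ` along a basic 1-chain. -/
noncomputable def lie1 (R : LCAMod F L N) {k : ℕ} (a₀ : A) (m : ℕ → N)
    (γ : (Fin (k+1) → A) → (Fin (k+1) → ℕ) → N) : (Fin (k+1) → A) → (Fin (k+1) → ℕ) → N :=
  deltaRaw L R (iota1 F a₀ m γ) + iota1 F a₀ m (deltaRaw L R γ)

end Product

end LCC

/-!
On `F[λ₁, …, λ_{k+1}] ⊗ M` the kernel of the substitution `λ_{k+1} ↦ λ†` is the image of the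
injective operator `∂^M + λ₁ + ⋯ + λ_{k+1}`. Injectivity transports sesquilinearity and
skew-symmetry through that operator, so `Ker ψ = ∂Γ̃`.

For surjectivity, restrict a bracket vanishing on the torsion to `U`, regard its values as
polynomials not involving `λ_{k+1}`, extend sesquilinearly to `F[∂] ⊗ U` and by zero on `T`, and
antisymmetrize. Applying `ψ` gives a sesquilinear map which agrees with the given bracket on `T` and
on `U`, by the skew-symmetry of the bracket, and hence everywhere.
-/

namespace LCC

/-! ### Polynomials with coefficients in a module -/

section LambdaPoly

variable {F M N ι : Type*} [CommRing F] [AddCommGroup M] [Module F M]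

/-- The space `F[λ_i : i ∈ ι] ⊗ M` of polynomials with coefficients in `M`, encoded by the finitely
supported family of coefficients of the monomials `λ^ν`. -/
abbrev LambdaPoly (ι M : Type*) [Zero M] := (ι → ℕ) →₀ M

variable (F) in
/-- The action of a permutation of the variables on polynomials. -/
noncomputable def permVars (σ : Equiv.Perm ι) : LambdaPoly ι M ≃ₗ[F] LambdaPoly ι M :=
  Finsupp.domLCongr (σ.arrowCongr (.refl ℕ))

/-- The endomorphism of `F[λ] ⊗ M` induced by an endomorphism of `M`. -/
noncomputable def mapCoeff (DM : Module.End F M) : Module.End F (LambdaPoly ι M) :=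
  Finsupp.mapRange.linearMap DM

@[simp]
lemma permVars_single (σ : Equiv.Perm ι) (ν : ι → ℕ) (v : M) :
    permVars F σ (Finsupp.single ν v) = Finsupp.single (ν ∘ σ.symm) v :=
  Finsupp.domLCongr_single _ _ _

lemma permVars_mul (σ τ : Equiv.Perm ι) (f : LambdaPoly ι M) :
    permVars F (σ * τ) f = permVars F σ (permVars F τ f) :=
  Finsupp.ext fun _ => rfl

@[simp]
lemma mapCoeff_apply (DM : Module.End F M) (f : LambdaPoly ι M) (ν : ι → ℕ) :
    mapCoeff DM f ν = DM (f ν) := rfl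

@[simp]
lemma mapCoeff_single (DM : Module.End F M) (ν : ι → ℕ) (v : M) :
    mapCoeff DM (Finsupp.single ν v) = Finsupp.single ν (DM v) :=
  Finsupp.mapRange_single (hf := map_zero DM)

lemma permVars_mapCoeff (DM : Module.End F M) (σ : Equiv.Perm ι) (f : LambdaPoly ι M) :
    permVars F σ (mapCoeff DM f) = mapCoeff DM (permVars F σ f) :=
  Finsupp.ext fun _ => rfl

variable [DecidableEq ι]

variable (F) in
/-- Multiplication by the variable `λ_i`. -/
noncomputable def mulVar (i : ι) : Module.End F (LambdaPoly ι M) :=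
  Finsupp.lmapDomain M F (· + Pi.single i 1)

@[simp]
lemma mulVar_single (i : ι) (ν : ι → ℕ) (v : M) :
    mulVar F i (Finsupp.single ν v) = Finsupp.single (ν + Pi.single i 1) v :=
  Finsupp.mapDomain_single

lemma mulVar_apply_add_single (i : ι) (f : LambdaPoly ι M) (ν : ι → ℕ) :
    mulVar F i f (ν + Pi.single i 1) = f ν :=
  Finsupp.mapDomain_apply (add_left_injective _) f ν

lemma mulVar_apply (i : ι) (f : LambdaPoly ι M) (ν : ι → ℕ) :
    mulVar F i f ν = if ν i = 0 then 0 else f (Function.update ν i (ν i - 1)) := by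
  split_ifs with h
  · refine Finsupp.mapDomain_of_notMem_range f ν ?_
    rintro ⟨μ, rfl⟩
    simp at h
  · have hν : ν = Function.update ν i (ν i - 1) + Pi.single i 1 := by
      ext j
      obtain rfl | hj := eq_or_ne j i
      · simpa using (Nat.succ_pred_eq_of_ne_zero h).symm
      · simp [hj]
    conv_lhs => rw [hν]
    exact mulVar_apply_add_single ..

lemma commute_mulVar_mulVar (i j : ι) :
    Commute (mulVar F i : Module.End F (LambdaPoly ι M)) (mulVar F j) :=
  Finsupp.lhom_ext fun ν v => by simp [add_right_comm]

lemma commute_mapCoeff_mulVar (DM : Module.End F M) (i : ι) :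
    Commute (mapCoeff DM) (mulVar F i) :=
  Finsupp.lhom_ext fun ν v => by simp

lemma permVars_mulVar (σ : Equiv.Perm ι) (i : ι) (f : LambdaPoly ι M) :
    permVars F σ (mulVar F i f) = mulVar F (σ i) (permVars F σ f) := by
  induction f using Finsupp.induction_linear with
  | zero => simp only [map_zero]
  | add f g hf hg => simp only [map_add, hf, hg]
  | single ν v =>
    have h : (Pi.single i 1 : ι → ℕ) ∘ σ.symm = Pi.single (σ i) 1 := by
      ext j
      simp [Pi.single_apply, Equiv.symm_apply_eq]
    simp [Pi.add_comp, h]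

variable [Fintype ι]

/-- The operator `∂^M + ∑ᵢ λ_i`, which induces the action of `∂` on cochains. -/
noncomputable def totalDeriv (DM : Module.End F M) : Module.End F (LambdaPoly ι M) :=
  mapCoeff DM + ∑ i, mulVar F i

lemma totalDeriv_apply (DM : Module.End F M) (f : LambdaPoly ι M) :
    totalDeriv DM f = mapCoeff DM f + ∑ i, mulVar F i f := by
  simp [totalDeriv]

lemma commute_totalDeriv_mulVar (DM : Module.End F M) (i : ι) :
    Commute (totalDeriv DM) (mulVar F i) :=
  (commute_mapCoeff_mulVar DM i).add_left
    (Commute.sum_left _ _ _ fun j _ => commute_mulVar_mulVar j i)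

lemma commute_totalDeriv_mapCoeff (DM : Module.End F M) :
    Commute (totalDeriv DM) (mapCoeff DM : Module.End F (LambdaPoly ι M)) :=
  (Commute.refl _).add_left
    (Commute.sum_left _ _ _ fun i _ => (commute_mapCoeff_mulVar DM i).symm)

lemma permVars_totalDeriv (DM : Module.End F M) (σ : Equiv.Perm ι) (f : LambdaPoly ι M) :
    permVars F σ (totalDeriv DM f) = totalDeriv DM (permVars F σ f) := by
  simp only [totalDeriv_apply, map_add, map_sum, permVars_mapCoeff, permVars_mulVar]
  rw [Equiv.sum_comp σ fun i => mulVar F i (permVars F σ f)]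

theorem totalDeriv_injective [Nonempty ι] (DM : Module.End F M) :
    Function.Injective (totalDeriv DM : Module.End F (LambdaPoly ι M)) := by
  rw [injective_iff_map_eq_zero]
  intro f hf
  by_contra hne
  obtain ⟨i⟩ := ‹Nonempty ι›
  obtain ⟨ν, hν, hmax⟩ :=
    f.support.exists_max_image (fun μ => μ i) (Finsupp.support_nonempty_iff.2 hne)
  have eq_zero_of_lt (μ : ι → ℕ) (hμ : ν i < μ i) : f μ = 0 :=
    Finsupp.notMem_support_iff.1 fun h => hμ.not_ge (hmax μ h)
  -- Only `λ_i` times the leading term contributes to the coefficient of `λ_i λ^ν`.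
  have hcoeff : totalDeriv DM f (ν + Pi.single i 1) = f ν := by
    rw [totalDeriv_apply, Finsupp.add_apply, Finsupp.finsetSum_apply, mapCoeff_apply,
      eq_zero_of_lt _ (by simp), map_zero, zero_add, Finset.sum_eq_single i,
      mulVar_apply_add_single]
    · intro j _ hj
      rw [mulVar_apply, eq_zero_of_lt _ (by simp [hj.symm]), ite_self]
    · simp
  exact Finsupp.mem_support_iff.1 hν (by rw [← hcoeff, hf, Finsupp.zero_apply])

end LambdaPoly

/-! ### The substitution of the last variable -/

section Substitution

variable {F M : Type*} [CommRing F] [AddCommGroup M] [Module F M] {k : ℕ}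

/-- The substitution `λ_{k+1} ↦ λ† = -λ₁ - ⋯ - λ_k - ∂^M`, with `∂^M` moved to the left; on
polynomials in `λ₁, …, λ_k` multiplication by `λ†` is the operator `-totalDeriv DM`. -/
noncomputable def substLast (DM : Module.End F M) :
    LambdaPoly (Fin (k + 1)) M →ₗ[F] LambdaPoly (Fin k) M :=
  Finsupp.lsum F fun μ =>
    ((-totalDeriv DM) ^ μ (Fin.last k)) ∘ₗ Finsupp.lsingle (Fin.init μ)

variable (F) in
/-- The inclusion of the polynomials in `λ₁, …, λ_k` into those in `λ₁, …, λ_{k+1}`. -/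
noncomputable def extendLast : LambdaPoly (Fin k) M →ₗ[F] LambdaPoly (Fin (k + 1)) M :=
  Finsupp.lmapDomain M F fun ρ => Fin.snoc ρ 0

lemma substLast_single (DM : Module.End F M) (μ : Fin (k + 1) → ℕ) (v : M) :
    substLast DM (Finsupp.single μ v) =
      ((-totalDeriv DM) ^ μ (Fin.last k)) (Finsupp.single (Fin.init μ) v) := by
  simp [substLast]

@[simp]
lemma extendLast_single (ρ : Fin k → ℕ) (v : M) :
    extendLast F (Finsupp.single ρ v) =
      Finsupp.single (Fin.snoc ρ 0 : Fin (k + 1) → ℕ) v :=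
  Finsupp.mapDomain_single

lemma extendLast_apply (f : LambdaPoly (Fin k) M) (μ : Fin (k + 1) → ℕ) :
    extendLast F f μ = if μ (Fin.last k) = 0 then f (Fin.init μ) else 0 := by
  split_ifs with h
  · have hμ : μ = Fin.snoc (Fin.init μ) 0 := by rw [← h, Fin.snoc_init_self]
    conv_lhs => rw [hμ]
    exact Finsupp.mapDomain_apply
      (fun ρ ρ' hρ => by simpa using congrArg (Fin.init (α := fun _ => ℕ)) hρ) f _
  · refine Finsupp.mapDomain_of_notMem_range f μ ?_
    rintro ⟨ρ, rfl⟩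
    simp at h

lemma init_add_single_castSucc (μ : Fin (k + 1) → ℕ) (i : Fin k) :
    Fin.init (α := fun _ => ℕ) (μ + Pi.single i.castSucc 1) = Fin.init μ + Pi.single i 1 := by
  ext j
  simp [Fin.init, Pi.single_apply]

lemma init_add_single_last (μ : Fin (k + 1) → ℕ) :
    Fin.init (α := fun _ => ℕ) (μ + Pi.single (Fin.last k) 1) = Fin.init μ := by
  ext j
  simp [Fin.init, (Fin.castSucc_lt_last j).ne]

lemma substLast_mulVar_castSucc (DM : Module.End F M) (i : Fin k)
    (f : LambdaPoly (Fin (k + 1)) M) :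
    substLast DM (mulVar F i.castSucc f) = mulVar F i (substLast DM f) := by
  induction f using Finsupp.induction_linear with
  | zero => simp only [map_zero]
  | add f g hf hg => simp only [map_add, hf, hg]
  | single μ v =>
    have h := ((commute_totalDeriv_mulVar DM i).neg_left.pow_left (μ (Fin.last k))).eq
    rw [mulVar_single, substLast_single, substLast_single, init_add_single_castSucc,
      ← mulVar_single (F := F), ← Module.End.mul_apply, ← Module.End.mul_apply, ← h]
    simp [(Fin.castSucc_lt_last i).ne']

lemma substLast_mulVar_last (DM : Module.End F M) (f : LambdaPoly (Fin (k + 1)) M) :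
    substLast DM (mulVar F (Fin.last k) f) = -totalDeriv DM (substLast DM f) := by
  induction f using Finsupp.induction_linear with
  | zero => simp only [map_zero, neg_zero]
  | add f g hf hg => simp only [map_add, hf, hg, neg_add]
  | single μ v =>
    simp [substLast_single, init_add_single_last, pow_succ']

lemma substLast_mapCoeff (DM : Module.End F M) (f : LambdaPoly (Fin (k + 1)) M) :
    substLast DM (mapCoeff DM f) = mapCoeff DM (substLast DM f) := by
  induction f using Finsupp.induction_linear with
  | zero => simp only [map_zero]
  | add f g hf hg => simp only [map_add, hf, hg]
  | single μ v =>
    have h := ((commute_totalDeriv_mapCoeff (ι := Fin k) DM).neg_left.pow_left (μ (Fin.last k))).eq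
    rw [mapCoeff_single, substLast_single, substLast_single, ← mapCoeff_single,
      ← Module.End.mul_apply, ← Module.End.mul_apply, h]

lemma substLast_totalDeriv (DM : Module.End F M) (f : LambdaPoly (Fin (k + 1)) M) :
    substLast DM (totalDeriv DM f) = 0 := by
  rw [totalDeriv_apply, Fin.sum_univ_castSucc]
  simp only [map_add, map_sum, substLast_mapCoeff, substLast_mulVar_castSucc,
    substLast_mulVar_last]
  rw [totalDeriv_apply]
  abel

lemma mulVar_castSucc_extendLast (i : Fin k) (f : LambdaPoly (Fin k) M) :
    mulVar F i.castSucc (extendLast F f) = extendLast F (mulVar F i f) := by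
  induction f using Finsupp.induction_linear with
  | zero => simp only [map_zero]
  | add f g hf hg => simp only [map_add, hf, hg]
  | single ρ v =>
    have h : (Fin.snoc ρ 0 + Pi.single i.castSucc 1 : Fin (k + 1) → ℕ) =
        Fin.snoc (ρ + Pi.single i 1) 0 := by
      ext j
      refine Fin.lastCases ?_ (fun j => ?_) j <;>
        simp [Pi.single_apply, (Fin.castSucc_lt_last i).ne']
    simp [h]

lemma mapCoeff_extendLast (DM : Module.End F M) (f : LambdaPoly (Fin k) M) :
    mapCoeff DM (extendLast F f) = extendLast F (mapCoeff DM f) := by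
  ext μ
  simp only [mapCoeff_apply, extendLast_apply, apply_ite DM, map_zero]

lemma totalDeriv_extendLast (DM : Module.End F M) (f : LambdaPoly (Fin k) M) :
    totalDeriv DM (extendLast F f) =
      extendLast F (totalDeriv DM f) + mulVar F (Fin.last k) (extendLast F f) := by
  simp only [totalDeriv_apply, Fin.sum_univ_castSucc, map_add, map_sum,
    mulVar_castSucc_extendLast, mapCoeff_extendLast, add_assoc]

lemma mulVar_mem_range_totalDeriv {DM : Module.End F M} {ι : Type*} [Fintype ι] [DecidableEq ι]
    (i : ι) {f : LambdaPoly ι M} (hf : f ∈ LinearMap.range (totalDeriv DM)) :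
    mulVar F i f ∈ LinearMap.range (totalDeriv DM) := by
  obtain ⟨g, rfl⟩ := hf
  exact ⟨mulVar F i g, LinearMap.congr_fun (commute_totalDeriv_mulVar DM i).eq g⟩

lemma sub_extendLast_substLast_mem_range (DM : Module.End F M)
    (f : LambdaPoly (Fin (k + 1)) M) :
    f - extendLast F (substLast DM f) ∈ LinearMap.range (totalDeriv DM) := by
  induction f using Finsupp.induction_linear with
  | zero => simp only [map_zero, sub_zero, zero_mem]
  | add f g hf hg =>
    rw [map_add, map_add, add_sub_add_comm]
    exact add_mem hf hg
  | single μ v =>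
    induction μ using Fin.snocCases with | _ ρ n
    induction n with
    | zero => simp [substLast_single]
    | succ n ih =>
      have hsucc : Finsupp.single (Fin.snoc ρ (n + 1) : Fin (k + 1) → ℕ) v =
          mulVar F (Fin.last k) (Finsupp.single (Fin.snoc ρ n) v) := by
        rw [mulVar_single]
        congr 1
        ext j
        refine Fin.lastCases ?_ (fun j => ?_) j <;>
          simp [(Fin.castSucc_lt_last _).ne]
      set f : LambdaPoly (Fin (k + 1)) M := Finsupp.single (Fin.snoc ρ n) v
      have h := totalDeriv_extendLast DM (substLast DM f)
      have hsplit : mulVar F (Fin.last k) f - extendLast F (substLast DM (mulVar F (Fin.last k) f))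
          = mulVar F (Fin.last k) (f - extendLast F (substLast DM f)) +
            totalDeriv DM (extendLast F (substLast DM f)) := by
        rw [h, substLast_mulVar_last, map_neg, map_sub]
        abel
      rw [hsucc, hsplit]
      exact add_mem (mulVar_mem_range_totalDeriv _ ih) ⟨_, rfl⟩

theorem exact_totalDeriv_substLast (DM : Module.End F M) :
    Function.Exact (totalDeriv (ι := Fin (k + 1)) DM) (substLast DM) := by
  intro f
  refine ⟨fun hf => ?_, fun ⟨g, hg⟩ => hg ▸ substLast_totalDeriv DM g⟩
  simpa [hf] using sub_extendLast_substLast_mem_range DM f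

end Substitution

/-! ### Coefficients of the substitution -/

section PowersOfTotalDeriv

variable {F M ι : Type*} [CommRing F] [AddCommGroup M] [Module F M]

lemma mapCoeff_pow_single (DM : Module.End F M) (n : ℕ) (ρ : ι → ℕ) (v : M) :
    (mapCoeff DM ^ n) (Finsupp.single ρ v) = Finsupp.single ρ ((DM ^ n) v) := by
  induction n with
  | zero => simp
  | succ n ih => simp only [pow_succ', Module.End.mul_apply, ih, mapCoeff_single]

variable [DecidableEq ι]

lemma mulVar_pow_single (i : ι) (n : ℕ) (ρ : ι → ℕ) (v : M) :
    (mulVar F i ^ n) (Finsupp.single ρ v) = Finsupp.single (ρ + Pi.single i n) v := by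
  induction n with
  | zero => simp
  | succ n ih =>
    rw [pow_succ', Module.End.mul_apply, ih, mulVar_single, add_assoc, ← Pi.single_add]

lemma noncommProd_mulVar_pow_single (m : ι → ℕ) (s : Finset ι)
    (h : (s : Set ι).Pairwise (Function.onFun Commute fun i =>
      (mulVar F i ^ m i : Module.End F (LambdaPoly ι M))))
    (ρ : ι → ℕ) (v : M) :
    s.noncommProd (fun i => mulVar F i ^ m i) h (Finsupp.single ρ v) =
      Finsupp.single (ρ + ∑ i ∈ s, Pi.single i (m i)) v := by
  induction s using Finset.induction_on with
  | empty => simp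
  | insert i s hi ih =>
    rw [Finset.noncommProd_insert_of_notMem _ _ _ _ hi, Module.End.mul_apply, ih,
      mulVar_pow_single, Finset.sum_insert hi, add_right_comm, add_assoc]

variable [Fintype ι]

lemma sum_mulVar_pow_single (n : ℕ) (ρ : ι → ℕ) (v : M) :
    ((∑ i, mulVar F i) ^ n) (Finsupp.single ρ v) =
      ∑ m ∈ Finset.univ.piAntidiag n,
        Nat.multinomial Finset.univ m • Finsupp.single (ρ + m) v := by
  rw [Finset.sum_pow_eq_sum_piAntidiag_of_commute _ _ fun i _ j _ _ => commute_mulVar_mulVar i j,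
    LinearMap.sum_apply]
  refine Finset.sum_congr rfl fun m _ => ?_
  rw [Module.End.mul_apply, noncommProd_mulVar_pow_single, Finset.univ_sum_single,
    Module.End.natCast_apply]

lemma totalDeriv_pow_single (DM : Module.End F M) (n : ℕ) (ρ : ι → ℕ) (v : M) :
    (totalDeriv DM ^ n) (Finsupp.single ρ v) =
      ∑ j ∈ Finset.range (n + 1), ∑ m ∈ Finset.univ.piAntidiag j,
        (n.choose j * Nat.multinomial Finset.univ m) •
          Finsupp.single (ρ + m) ((DM ^ (n - j)) v) := by
  have hcomm : Commute (∑ i, mulVar F i) (mapCoeff DM : Module.End F (LambdaPoly ι M)) :=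
    Commute.sum_left _ _ _ fun i _ => (commute_mapCoeff_mulVar DM i).symm
  rw [totalDeriv, add_comm, hcomm.add_pow, LinearMap.sum_apply]
  refine Finset.sum_congr rfl fun j _ => ?_
  simp only [Module.End.mul_apply, Module.End.natCast_apply, map_nsmul, mapCoeff_pow_single,
    sum_mulVar_pow_single, Finset.smul_sum, mul_smul]

end PowersOfTotalDeriv

section SubstDag

variable {F M : Type*} [Field F] [AddCommGroup M] [Module F M] {k : ℕ}

lemma mnom_eq_choose_mul_multinomial (m : Fin k → ℕ) (s : ℕ) :
    mnom m s = (wt m + s).choose (wt m) * Nat.multinomial Finset.univ m := by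
  refine Nat.div_eq_of_eq_mul_left (by positivity) ?_
  rw [← Nat.choose_mul_factorial_mul_factorial (Nat.le_add_right (wt m) s), Nat.add_sub_cancel_left,
    wt, ← Nat.multinomial_spec]
  ring

lemma totalDeriv_pow_single_apply_add (DM : Module.End F M) (n : ℕ) (ρ m : Fin k → ℕ) (v : M) :
    (totalDeriv DM ^ n) (Finsupp.single ρ v) (ρ + m) =
      if wt m ≤ n then mnom m (n - wt m) • (DM ^ (n - wt m)) v else 0 := by
  have hmem (j : ℕ) : m ∈ Finset.univ.piAntidiag j ↔ wt m = j := by simp [wt]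
  simp only [totalDeriv_pow_single, Finsupp.finsetSum_apply, Finsupp.smul_apply,
    Finsupp.single_apply, add_right_inj, smul_ite, smul_zero, Finset.sum_ite_eq', hmem,
    Finset.sum_ite_eq, Finset.mem_range, Nat.lt_succ_iff]
  refine if_ctx_congr Iff.rfl (fun h => ?_) fun _ => rfl
  rw [mnom_eq_choose_mul_multinomial, Nat.add_sub_of_le h]

lemma totalDeriv_pow_single_apply_of_not_le (DM : Module.End F M) (n : ℕ) {ρ ν : Fin k → ℕ}
    (h : ¬ρ ≤ ν) (v : M) : (totalDeriv DM ^ n) (Finsupp.single ρ v) ν = 0 := by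
  have hne (m : Fin k → ℕ) : ρ + m ≠ ν := fun hm => h (hm ▸ le_self_add)
  simp [totalDeriv_pow_single, Finsupp.finsetSum_apply, hne]

lemma substDag_single_of_not_le (DM : Module.End F M) {μ : Fin (k + 1) → ℕ} {ν : Fin k → ℕ}
    (h : ¬Fin.init μ ≤ ν) (v : M) :
    substDag DM (fun ρ n => Finsupp.single μ v (Fin.snoc ρ n)) ν = 0 := by
  have hne {ρ : Fin k → ℕ} (hρ : ρ ≤ ν) (n : ℕ) : μ ≠ Fin.snoc ρ n := by
    rintro rfl
    simp [hρ] at h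
  refine Finset.sum_eq_zero fun ρ hρ => ?_
  simp [Finsupp.single_eq_of_ne' (hne (Finset.mem_Iic.1 hρ) _)]

lemma substDag_single_snoc_add (DM : Module.End F M) (ρ m : Fin k → ℕ) (n : ℕ) (v : M) :
    substDag DM (fun ρ' n' => Finsupp.single (Fin.snoc ρ n : Fin (k + 1) → ℕ) v (Fin.snoc ρ' n'))
        (ρ + m) =
      if wt m ≤ n then ((-1 : F) ^ n * mnom m (n - wt m)) • (DM ^ (n - wt m)) v else 0 := by
  have hsub : (fun r => (ρ + m) r - ρ r) = m := by ext; simp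
  rw [substDag, Finset.sum_eq_single ρ]
  · simp only [hsub, Finsupp.single_apply, Fin.snoc_inj, true_and, apply_ite, map_zero, smul_zero]
    split_ifs with h
    · rw [finsum_eq_single _ (n - wt m) fun s hs => if_neg (by omega), if_pos (by omega),
        Nat.add_sub_of_le h]
    · exact finsum_eq_zero_of_forall_eq_zero fun s => if_neg (by omega)
  · intro ρ' _ hne
    have hne' (n' : ℕ) : (Fin.snoc ρ n : Fin (k + 1) → ℕ) ≠ Fin.snoc ρ' n' := fun h =>
      hne (Fin.snoc_injective2 h).1.symm
    simp [Finsupp.single_eq_of_ne' (hne' _)]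
  · simp

lemma substDag_add (DM : Module.End F M) (f g : LambdaPoly (Fin (k + 1)) M) (ν : Fin k → ℕ) :
    substDag DM (fun ρ n => (f + g) (Fin.snoc ρ n)) ν =
      substDag DM (fun ρ n => f (Fin.snoc ρ n)) ν +
        substDag DM (fun ρ n => g (Fin.snoc ρ n)) ν := by
  have hfin (h : LambdaPoly (Fin (k + 1)) M) (ρ : Fin k → ℕ) (b : ℕ) (c : ℕ → F) :
      (Function.support fun s =>
        c s • (DM ^ s) (h (Fin.snoc ρ (b + s)))).Finite := by
    have hinj : Function.Injective fun s => (Fin.snoc ρ (b + s) : Fin (k + 1) → ℕ) := fun s t hst =>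
      Nat.add_left_cancel (Fin.snoc_injective2 hst).2
    refine (h.hasFiniteSupport.preimage hinj.injOn).subset fun s hs hzero => hs ?_
    simp [hzero]
  simp only [substDag, ← Finset.sum_add_distrib]
  refine Finset.sum_congr rfl fun ρ _ => ?_
  simp only [Finsupp.add_apply, map_add, smul_add]
  exact finsum_add_distrib (hfin f ..) (hfin g ..)

theorem substLast_apply (DM : Module.End F M) (f : LambdaPoly (Fin (k + 1)) M) (ν : Fin k → ℕ) :
    substLast DM f ν = substDag DM (fun ρ n => f (Fin.snoc ρ n)) ν := by
  induction f using Finsupp.induction_linear with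
  | zero => simp [substDag]
  | add f g hf hg => rw [map_add, Finsupp.add_apply, hf, hg, substDag_add]
  | single μ v =>
    induction μ using Fin.snocCases with | _ ρ n
    rw [substLast_single, Fin.init_snoc, Fin.snoc_last, ← neg_one_smul F (totalDeriv DM), smul_pow,
      LinearMap.smul_apply, Finsupp.smul_apply]
    by_cases h : ρ ≤ ν
    · obtain ⟨m, rfl⟩ := exists_add_of_le h
      rw [substDag_single_snoc_add, totalDeriv_pow_single_apply_add, smul_ite, smul_zero,
        mul_smul, Nat.cast_smul_eq_nsmul]
    · rw [substDag_single_of_not_le DM (by simpa using h),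
        totalDeriv_pow_single_apply_of_not_le DM _ h, smul_zero]

end SubstDag

/-! ### Sesquilinear maps -/

section Sesquilinear

variable {F ι A B N N' : Type*} [CommRing F] [AddCommGroup A] [Module F A] [AddCommGroup B]
  [Module F B] [AddCommGroup N] [Module F N] [AddCommGroup N'] [Module F N']

lemma multilinear_eq_zero_of_ker_eq_top [Finite ι] [DecidableEq ι] {S : Set A}
    {f : MultilinearMap F (fun _ : ι => A) N}
    (hker : ∀ a i, S ⊆ LinearMap.ker (f.toLinearMap a i) → LinearMap.ker (f.toLinearMap a i) = ⊤)
    (h : ∀ a, (∀ i, a i ∈ S) → f a = 0) : f = 0 := by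
  cases nonempty_fintype ι
  suffices ∀ (s : Finset ι) a, (∀ i ∉ s, a i ∈ S) → f a = 0 from
    MultilinearMap.ext fun a => this Finset.univ a (by simp)
  intro s
  induction s using Finset.induction_on with
  | empty => exact fun a ha => h a fun i => ha i (Finset.notMem_empty i)
  | insert j s hj ih =>
    intro a ha
    have hS : S ⊆ LinearMap.ker (f.toLinearMap a j) := fun x hx => ih _ fun i hi => by
      obtain rfl | hij := eq_or_ne i j
      · simpa using hx
      · simpa [hij] using ha i (by simp [hi, hij])
    have haj : a j ∈ LinearMap.ker (f.toLinearMap a j) := hker a j hS ▸ Submodule.mem_top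
    simpa using haj

lemma multilinear_finsupp_ext [Finite ι] {κ U : Type*} [AddCommGroup U] [Module F U]
    {f g : MultilinearMap F (fun _ : ι => κ →₀ U) N}
    (h : ∀ (p : ι → κ) (u : ι → U), f (fun i => Finsupp.single (p i) (u i)) =
      g (fun i => Finsupp.single (p i) (u i))) : f = g := by
  classical
  rw [← sub_eq_zero]
  refine multilinear_eq_zero_of_ker_eq_top
    (S := {x | ∃ n u, Finsupp.single n u = x}) (fun a i hS => ?_) fun a ha => ?_
  · refine Submodule.eq_top_iff'.2 fun x => ?_
    induction x using Finsupp.induction_linear with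
    | zero => exact zero_mem _
    | add x y hx hy => exact add_mem hx hy
    | single n u => exact hS ⟨n, u, rfl⟩
  · choose p u hpu using ha
    rw [sub_apply, sub_eq_zero, ← funext hpu, h]

variable [DecidableEq ι]

/-- Sesquilinearity of a multilinear map with respect to an endomorphism `D` of the source: in the
`i`-th argument `D` can be moved out at the price of becoming the operator `Y i`. With `Y i` the
multiplication by `-λ_i` this is (A1). -/
def IsSesquilinear (D : Module.End F A) (Y : ι → Module.End F N)
    (f : MultilinearMap F (fun _ : ι => A) N) : Prop :=
  ∀ a i, f (Function.update a i (D (a i))) = Y i (f a)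

/-- The set `S` generates `A` as a module over `F[D]`. -/
def IsGenerating (D : Module.End F A) (S : Set A) : Prop :=
  ∀ V ∈ D.invtSubmodule, S ⊆ V → V = ⊤

lemma IsSesquilinear.eq_zero_of_isGenerating [Finite ι] {D : Module.End F A}
    {Y : ι → Module.End F N} {f : MultilinearMap F (fun _ : ι => A) N} (hf : IsSesquilinear D Y f)
    {S : Set A} (hS : IsGenerating D S) (h : ∀ a, (∀ i, a i ∈ S) → f a = 0) : f = 0 := by
  refine multilinear_eq_zero_of_ker_eq_top (fun a i => hS _ fun x hx => ?_) h
  have hsesq := hf (Function.update a i x) i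
  rw [Function.update_idem, Function.update_self] at hsesq
  rw [LinearMap.mem_ker, MultilinearMap.toLinearMap_apply] at hx
  rw [Submodule.mem_comap, LinearMap.mem_ker, MultilinearMap.toLinearMap_apply, hsesq, hx, map_zero]

lemma IsSesquilinear.compLinearMap {D : Module.End F A} {D' : Module.End F B}
    {Y : ι → Module.End F N} {f : MultilinearMap F (fun _ : ι => B) N} (hf : IsSesquilinear D' Y f)
    {π : A →ₗ[F] B} (hπ : ∀ x, π (D x) = D' (π x)) :
    IsSesquilinear D Y (f.compLinearMap fun _ => π) := fun a i => by
  rw [MultilinearMap.compLinearMap_apply, MultilinearMap.compLinearMap_apply, ← hf]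
  congr 1
  ext j
  obtain rfl | hj := eq_or_ne j i
  · simp [hπ]
  · simp [hj]

lemma IsSesquilinear.domDomCongr {D : Module.End F A}
    {Y : ι → Module.End F N} {f : MultilinearMap F (fun _ : ι => A) N}
    (hf : IsSesquilinear D Y f) (σ : Equiv.Perm ι) :
    IsSesquilinear D (fun i => Y (σ.symm i)) (f.domDomCongr σ) := fun a i => by
  have hcomp : (fun j => Function.update a i (D (a i)) (σ j)) =
      Function.update (a ∘ σ) (σ.symm i) (D ((a ∘ σ) (σ.symm i))) := by
    rw [Function.comp_apply, σ.apply_symm_apply]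
    exact Function.update_comp_equiv a σ i _
  rw [MultilinearMap.domDomCongr_apply, hcomp, hf]
  rfl

lemma IsSesquilinear.compMultilinearMap {D : Module.End F A} {Y : ι → Module.End F N}
    {Y' : ι → Module.End F N'} {f : MultilinearMap F (fun _ : ι => A) N}
    (hf : IsSesquilinear D Y f) {g : N →ₗ[F] N'} (hg : ∀ i x, g (Y i x) = Y' i (g x)) :
    IsSesquilinear D Y' (g.compMultilinearMap f) := fun a i => by
  rw [LinearMap.compMultilinearMap_apply, hf, hg, LinearMap.compMultilinearMap_apply]

lemma IsSesquilinear.sub {D : Module.End F A} {Y : ι → Module.End F N}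
    {f g : MultilinearMap F (fun _ : ι => A) N} (hf : IsSesquilinear D Y f)
    (hg : IsSesquilinear D Y g) : IsSesquilinear D Y (f - g) := fun a i => by
  rw [sub_apply, sub_apply, hf, hg, map_sub]

lemma IsSesquilinear.smul {D : Module.End F A} {Y : ι → Module.End F N}
    {f : MultilinearMap F (fun _ : ι => A) N} (hf : IsSesquilinear D Y f) (r : F) :
    IsSesquilinear D Y (r • f) := fun a i => by
  rw [smul_apply, smul_apply, hf, map_smul]

lemma IsSesquilinear.sum {κ : Type*} {D : Module.End F A} {Y : ι → Module.End F N}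
    {s : Finset κ} {f : κ → MultilinearMap F (fun _ : ι => A) N}
    (hf : ∀ j ∈ s, IsSesquilinear D Y (f j)) : IsSesquilinear D Y (∑ j ∈ s, f j) := fun a i => by
  rw [sum_apply, sum_apply, map_sum]
  exact Finset.sum_congr rfl fun j hj => hf j hj a i

variable (F) in
/-- The endomorphism of the free module `F[∂] ⊗ U`, encoded as `ℕ →₀ U`, given by `∂`. -/
noncomputable def shift (U : Type*) [AddCommGroup U] [Module F U] : Module.End F (ℕ →₀ U) :=
  Finsupp.lmapDomain U F Nat.succ

@[simp]
lemma shift_single {U : Type*} [AddCommGroup U] [Module F U] (n : ℕ) (u : U) :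
    shift F U (Finsupp.single n u) = Finsupp.single (n + 1) u :=
  Finsupp.mapDomain_single

variable [Finite ι]

lemma exists_monomial_operators {Y : ι → Module.End F N} (hY : ∀ i j, Commute (Y i) (Y j)) :
    ∃ Φ : (ι → ℕ) → Module.End F N, Φ 0 = 1 ∧ ∀ i p, Φ (p + Pi.single i 1) = Y i * Φ p := by
  cases nonempty_fintype ι
  let Φ : (ι → Multiplicative ℕ) →* Module.End F N :=
    MonoidHom.noncommPiCoprod (fun i => powersHom _ (Y i))
      fun i j _ m n => (hY i j).pow_pow m.toAdd n.toAdd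
  refine ⟨fun p => Φ fun i => Multiplicative.ofAdd (p i), map_one Φ, fun i p => ?_⟩
  have hsplit : (fun j => Multiplicative.ofAdd ((p + Pi.single i 1 : ι → ℕ) j)) =
      Pi.mulSingle i (Multiplicative.ofAdd 1) * fun j => Multiplicative.ofAdd (p j) := by
    ext j
    obtain rfl | hj := eq_or_ne j i
    · simp [mul_comm]
    · simp [hj]
  have hΦ : Φ (Pi.mulSingle i (Multiplicative.ofAdd 1)) = Y i :=
    (MonoidHom.noncommPiCoprod_mulSingle _ _ _).trans (pow_one (Y i))
  beta_reduce
  rw [hsplit, map_mul, hΦ]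

theorem exists_isSesquilinear_shift_extending {U : Type*} [AddCommGroup U] [Module F U]
    {Y : ι → Module.End F N} (hY : ∀ i j, Commute (Y i) (Y j))
    (e : MultilinearMap F (fun _ : ι => U) N) :
    ∃ f : MultilinearMap F (fun _ : ι => ℕ →₀ U) N, IsSesquilinear (shift F U) Y f ∧
      ∀ u, f (fun i => Finsupp.single 0 (u i)) = e u := by
  classical
  cases nonempty_fintype ι
  obtain ⟨Φ, hΦ_zero, hΦ_add⟩ := exists_monomial_operators hY
  let f : MultilinearMap F (fun _ : ι => ℕ →₀ U) N :=
    (MultilinearMap.fromDFinsuppEquiv (fun _ : ι => ℕ) F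
      fun p => (Φ p).compMultilinearMap e).compLinearMap
        fun _ => (finsuppLequivDFinsupp F).toLinearMap
  have hf (p : ι → ℕ) (u : ι → U) : f (fun i => Finsupp.single (p i) (u i)) = Φ p (e u) := by
    simp [f]
  refine ⟨f, fun a i => ?_, fun u => ?_⟩
  · have hext : (f.compLinearMap fun j => if j = i then shift F U else LinearMap.id) =
        (Y i).compMultilinearMap f := multilinear_finsupp_ext fun p u => by
      have hshift : (fun j => (if j = i then shift F U else LinearMap.id)
          (Finsupp.single (p j) (u j))) =
            fun j => Finsupp.single ((p + Pi.single i 1 : ι → ℕ) j) (u j) := by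
        ext1 j
        obtain rfl | hj := eq_or_ne j i
        · simp
        · simp [hj]
      rw [MultilinearMap.compLinearMap_apply, hshift, hf, hΦ_add, Module.End.mul_apply, ← hf,
        LinearMap.compMultilinearMap_apply]
    have hupdate : Function.update a i (shift F U (a i)) =
        fun j => (if j = i then shift F U else LinearMap.id) (a j) := by
      ext1 j
      obtain rfl | hj := eq_or_ne j i
      · simp
      · simp [hj]
    rw [hupdate, ← MultilinearMap.compLinearMap_apply, hext, LinearMap.compMultilinearMap_apply]
  · simpa [hΦ_zero] using hf 0 u

end Sesquilinear

/-! ### The torsion decomposition -/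

section Decomposition

open Polynomial

variable {F A : Type*} [Field F] [AddCommGroup A] [Module F A] {L : LCA F A}

variable (L) in
/-- The torsion of the `F[∂]`-module `A`, as an `F`-subspace. -/
noncomputable def torsionSubmodule : Submodule F A :=
  (((Submodule.torsion F[X] (Module.AEval' L.D)).restrictScalars F).comap
    (Module.AEval'.of L.D).toLinearMap).copy {x | IsTor L x} <| by
  ext x
  simp only [IsTor, Set.mem_ofPred_eq, Submodule.comap_coe, Set.mem_preimage, SetLike.mem_coe,
    Submodule.restrictScalars_mem, Submodule.mem_torsion_iff, LinearEquiv.coe_coe]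
  simp only [Subtype.exists, mem_nonZeroDivisors_iff_ne_zero, Submonoid.mk_smul, exists_prop,
    ← Module.AEval.of_aeval_smul, LinearEquiv.map_eq_zero_iff, Module.End.smul_def]

lemma IsTor.map_D {x : A} (hx : IsTor L x) : IsTor L (L.D x) := by
  obtain ⟨p, hp, hpx⟩ := hx
  refine ⟨p, hp, ?_⟩
  have hcomm := LinearMap.congr_fun ((Polynomial.commute_X p).map (Polynomial.aeval L.D)).eq x
  simpa [hpx] using hcomm.symm

theorem Decomposes.exists_projection (hA : Decomposes L) :
    ∃ (U : Submodule F A) (π : A →ₗ[F] ℕ →₀ U), (∀ x, IsTor L x → π x = 0) ∧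
      (∀ u : U, π u = Finsupp.single 0 u) ∧ (∀ x, π (L.D x) = shift F U (π x)) ∧
        IsGenerating L.D ({x | IsTor L x} ∪ U) := by
  obtain ⟨U, hU⟩ := hA
  let freeIncl : (ℕ →₀ U) →ₗ[F] A := Finsupp.lsum F fun n => (L.D ^ n) ∘ₗ U.subtype
  let e : (torsionSubmodule L × (ℕ →₀ U)) ≃ₗ[F] A :=
    LinearEquiv.ofBijective ((torsionSubmodule L).subtype.coprod freeIncl) hU
  have he (t : torsionSubmodule L) (w : ℕ →₀ U) : e (t, w) = t + freeIncl w := rfl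
  have hfree_single (n : ℕ) (u : U) : freeIncl (Finsupp.single n u) = (L.D ^ n) u := by
    simp [freeIncl]
  have hfree_shift (w : ℕ →₀ U) : L.D (freeIncl w) = freeIncl (shift F U w) := by
    induction w using Finsupp.induction_linear with
    | zero => simp only [map_zero]
    | add v w hv hw => simp only [map_add, hv, hw]
    | single n u => rw [shift_single, hfree_single, hfree_single, pow_succ', Module.End.mul_apply]
  have hπ {x : A} {t : torsionSubmodule L} {w : ℕ →₀ U} (hx : x = t + freeIncl w) :
      (LinearMap.snd F _ _ ∘ₗ e.symm.toLinearMap) x = w := by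
    rw [hx, ← he]
    simp
  refine ⟨U, LinearMap.snd F _ _ ∘ₗ e.symm.toLinearMap, fun x hx => ?_, fun u => ?_, fun x => ?_,
    fun V hV hSV => Submodule.eq_top_iff'.2 fun x => ?_⟩
  · exact hπ (t := ⟨x, hx⟩) (by simp)
  · exact hπ (t := 0) (by simp [hfree_single])
  · obtain ⟨⟨t, w⟩, rfl⟩ := e.surjective x
    rw [hπ (he t w), hπ (t := ⟨L.D t, t.2.map_D⟩) (by rw [he, map_add, hfree_shift])]
  · obtain ⟨⟨t, w⟩, rfl⟩ := e.surjective x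
    suffices freeIncl w ∈ V from add_mem (hSV (.inl t.2)) this
    induction w using Finsupp.induction_linear with
    | zero => simp
    | add v w hv hw => simpa using add_mem hv hw
    | single n u =>
      rw [hfree_single, Module.End.pow_apply]
      exact Set.MapsTo.iterate (show Set.MapsTo L.D V V from hV) n (hSV (.inr u.2))

end Decomposition

/-! ### Cochains and brackets -/

section Cochain

lemma exists_compMultilinearMap_eq {F ι A N N' : Type*} [CommRing F] [AddCommGroup A] [Module F A]
    [AddCommGroup N] [Module F N] [AddCommGroup N'] [Module F N'] {g : N →ₗ[F] N'}
    (hg : Function.Injective g) {f : MultilinearMap F (fun _ : ι => A) N'}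
    (hf : ∀ a, f a ∈ LinearMap.range g) :
    ∃ h : MultilinearMap F (fun _ : ι => A) N, g.compMultilinearMap h = f :=
  ⟨(LinearEquiv.ofInjective g hg).symm.toLinearMap.compMultilinearMap
    (f.codRestrict (LinearMap.range g) hf), MultilinearMap.ext fun a =>
      congrArg Subtype.val ((LinearEquiv.ofInjective g hg).apply_symm_apply ⟨f a, hf a⟩)⟩

variable {F ι A M : Type*} [CommRing F] [AddCommGroup A] [Module F A] [AddCommGroup M]
  [Module F M] [DecidableEq ι] {D : Module.End F A}

/-- Basic cochains (A1), (A2) for the `F[∂]`-module `(A, D)`, as multilinear maps with values in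
`F[λ_i : i ∈ ι] ⊗ M`. -/
structure IsCochain [Fintype ι] (D : Module.End F A)
    (Γ : MultilinearMap F (fun _ : ι => A) (LambdaPoly ι M)) : Prop where
  sesq : IsSesquilinear D (fun i => -mulVar F i) Γ
  skew : ∀ a σ, permVars F σ (Γ (a ∘ σ)) = Equiv.Perm.sign σ • Γ a

variable [Fintype ι]

lemma IsCochain.sub {Γ Θ : MultilinearMap F (fun _ : ι => A) (LambdaPoly ι M)}
    (hΓ : IsCochain D Γ) (hΘ : IsCochain D Θ) : IsCochain D (Γ - Θ) where
  sesq := hΓ.sesq.sub hΘ.sesq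
  skew a σ := by rw [sub_apply, map_sub, hΓ.skew, hΘ.skew, sub_apply, smul_sub]

lemma IsCochain.smul {Γ : MultilinearMap F (fun _ : ι => A) (LambdaPoly ι M)}
    (hΓ : IsCochain D Γ) (r : F) : IsCochain D (r • Γ) where
  sesq := hΓ.sesq.smul r
  skew a σ := by rw [smul_apply, map_smul, hΓ.skew, smul_apply, smul_comm]

/-- The signed sum over the simultaneous permutations of the arguments and the variables, which
turns a sesquilinear map into a basic cochain. -/
noncomputable def antisymmetrize (Γ : MultilinearMap F (fun _ : ι => A) (LambdaPoly ι M)) :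
    MultilinearMap F (fun _ : ι => A) (LambdaPoly ι M) :=
  ∑ σ : Equiv.Perm ι, ((Equiv.Perm.sign σ : ℤ) : F) •
    (permVars F σ).toLinearMap.compMultilinearMap (Γ.domDomCongr σ)

lemma antisymmetrize_apply (Γ : MultilinearMap F (fun _ : ι => A) (LambdaPoly ι M)) (a : ι → A) :
    antisymmetrize Γ a = ∑ σ, Equiv.Perm.sign σ • permVars F σ (Γ (a ∘ σ)) := by
  simp only [antisymmetrize, sum_apply, smul_apply, Int.cast_smul_eq_zsmul, Units.smul_def]
  rfl

lemma isCochain_antisymmetrize {Γ : MultilinearMap F (fun _ : ι => A) (LambdaPoly ι M)}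
    (hΓ : IsSesquilinear D (fun i => -mulVar F i) Γ) : IsCochain D (antisymmetrize Γ) where
  sesq := IsSesquilinear.sum fun σ _ =>
    ((hΓ.domDomCongr σ).compMultilinearMap fun i f => by
      simp [permVars_mulVar]).smul _
  skew a σ := by
    simp only [antisymmetrize_apply, map_sum, Finset.smul_sum]
    refine Fintype.sum_equiv (Equiv.mulLeft σ) _ _ fun τ => ?_
    have hsign : Equiv.Perm.sign σ * Equiv.Perm.sign (σ * τ) = Equiv.Perm.sign τ := by
      rw [Equiv.Perm.sign_mul, ← mul_assoc, Int.units_mul_self, one_mul]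
    rw [Equiv.coe_mulLeft, smul_smul, hsign, permVars_mul, Units.smul_def, map_zsmul]
    rfl

lemma IsCochain.of_totalDeriv_comp [Nonempty ι] {DM : Module.End F M}
    {Γ : MultilinearMap F (fun _ : ι => A) (LambdaPoly ι M)}
    (hΓ : IsCochain D ((totalDeriv DM).compMultilinearMap Γ)) : IsCochain D Γ where
  sesq a i := totalDeriv_injective DM <|
    (hΓ.sesq a i).trans
      (LinearMap.congr_fun (commute_totalDeriv_mulVar DM i).neg_right.eq (Γ a)).symm
  skew a σ := totalDeriv_injective DM <| by
    rw [← permVars_totalDeriv, Units.smul_def, map_zsmul]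
    exact hΓ.skew a σ

theorem IsCochain.substLast_comp_eq_iff {k : ℕ} {DM : Module.End F M}
    {Γ Θ : MultilinearMap F (fun _ : Fin (k + 1) => A) (LambdaPoly (Fin (k + 1)) M)}
    (hΓ : IsCochain D Γ) (hΘ : IsCochain D Θ) :
    (substLast DM).compMultilinearMap Γ = (substLast DM).compMultilinearMap Θ ↔
      ∃ H, IsCochain D H ∧ Γ - Θ = (totalDeriv DM).compMultilinearMap H := by
  have hsub (a : Fin (k + 1) → A) : substLast DM (Γ a) = substLast DM (Θ a) ↔
      (Γ - Θ) a ∈ LinearMap.range (totalDeriv DM) := by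
    rw [← sub_eq_zero, ← map_sub, ← sub_apply]
    exact exact_totalDeriv_substLast DM _
  constructor
  · intro h
    obtain ⟨H, hH⟩ := exists_compMultilinearMap_eq (totalDeriv_injective DM) fun a =>
      (hsub a).1 (DFunLike.congr_fun h a)
    exact ⟨H, .of_totalDeriv_comp (hH ▸ hΓ.sub hΘ), hH.symm⟩
  · rintro ⟨H, -, hH⟩
    exact MultilinearMap.ext fun a => (hsub a).2 ⟨H a, DFunLike.congr_fun hH.symm a⟩

end Cochain

section Bracket

variable {F A M : Type*} [AddCommGroup A] [AddCommGroup M] {k : ℕ}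

section CommRing

variable [CommRing F] [Module F A] [Module F M]

/-- The operators on `F[λ₁, …, λ_k] ⊗ M` by which `∂` acts on the arguments of a
`(k+1)`-`λ`-bracket: `-λ_i` for `i ≤ k`, and `λ₁ + ⋯ + λ_k + ∂^M` for the last argument. -/
noncomputable def bracketOp (DM : Module.End F M) :
    Fin (k + 1) → Module.End F (LambdaPoly (Fin k) M) :=
  Fin.snoc (fun i => -mulVar F i) (totalDeriv DM)

lemma substLast_neg_mulVar (DM : Module.End F M) (i : Fin (k + 1))
    (f : LambdaPoly (Fin (k + 1)) M) :
    substLast DM ((-mulVar F i) f) = bracketOp DM i (substLast DM f) := by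
  rw [LinearMap.neg_apply, map_neg]
  refine Fin.lastCases ?_ (fun i => ?_) i
  · rw [substLast_mulVar_last, neg_neg, bracketOp, Fin.snoc_last]
  · rw [substLast_mulVar_castSucc, bracketOp, Fin.snoc_castSucc, LinearMap.neg_apply]

/-- `(k+1)`-`λ`-brackets (B1), (B2), (B3) for the `F[∂]`-modules `(A, D)` and `(M, DM)`, as
multilinear maps with values in `F[λ₁, …, λ_k] ⊗ M`. -/
structure IsBracket (D : Module.End F A) (DM : Module.End F M)
    (C : MultilinearMap F (fun _ : Fin (k + 1) => A) (LambdaPoly (Fin k) M)) : Prop where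
  sesq : IsSesquilinear D (bracketOp DM) C
  skew : ∀ a (σ : Equiv.Perm (Fin (k + 1))), C a =
    Equiv.Perm.sign σ • substLast DM (permVars F σ (extendLast F (C (a ∘ σ))))

lemma IsBracket.substLast_antisymmetrize {D : Module.End F A} {DM : Module.End F M}
    {C : MultilinearMap F (fun _ : Fin (k + 1) => A) (LambdaPoly (Fin k) M)}
    (hC : IsBracket D DM C)
    {Γ : MultilinearMap F (fun _ : Fin (k + 1) => A) (LambdaPoly (Fin (k + 1)) M)}
    {a : Fin (k + 1) → A} (hΓ : ∀ σ : Equiv.Perm (Fin (k + 1)),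
      Γ (a ∘ σ) = extendLast F (C (a ∘ σ))) :
    substLast DM (antisymmetrize Γ a) = ((k + 1).factorial : F) • C a := by
  have hterm (σ : Equiv.Perm (Fin (k + 1))) :
      substLast DM (Equiv.Perm.sign σ • permVars F σ (Γ (a ∘ σ))) = C a := by
    rw [hΓ, Units.smul_def, map_zsmul, ← Units.smul_def, ← hC.skew]
  rw [antisymmetrize_apply, map_sum, Finset.sum_congr rfl fun σ _ => hterm σ, Finset.sum_const,
    Finset.card_univ, Fintype.card_perm, Fintype.card_fin, Nat.cast_smul_eq_nsmul]

end CommRing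

theorem IsBracket.exists_isCochain [Field F] [CharZero F] [Module F A] [Module F M]
    {D : Module.End F A} {DM : Module.End F M}
    {C : MultilinearMap F (fun _ : Fin (k + 1) => A) (LambdaPoly (Fin k) M)}
    (hC : IsBracket D DM C) {T : Set A} (hCT : ∀ a, (∃ i, a i ∈ T) → C a = 0)
    {U : Submodule F A} {π : A →ₗ[F] ℕ →₀ U} (hπT : ∀ x ∈ T, π x = 0)
    (hπU : ∀ u : U, π u = Finsupp.single 0 u) (hπD : ∀ x, π (D x) = shift F U (π x))
    (hgen : IsGenerating D (T ∪ U)) :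
    ∃ Γ, IsCochain D Γ ∧ (substLast DM).compMultilinearMap Γ = C := by
  obtain ⟨f, hf, hfU⟩ := exists_isSesquilinear_shift_extending
    (fun i j => (commute_mulVar_mulVar (F := F) (ι := Fin (k + 1)) (M := M) i j).neg_left.neg_right)
    ((extendLast F).compMultilinearMap (C.compLinearMap fun _ => U.subtype))
  let Γ₀ : MultilinearMap F (fun _ : Fin (k + 1) => A) (LambdaPoly (Fin (k + 1)) M) :=
    f.compLinearMap fun _ => π
  have hΓ₀_T {a : Fin (k + 1) → A} {i : Fin (k + 1)} (hi : a i ∈ T) : Γ₀ a = 0 :=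
    f.map_coord_zero i (hπT _ hi)
  have hΓ₀_U (u : Fin (k + 1) → U) : Γ₀ (fun i => u i) = extendLast F (C fun i => u i) := by
    rw [MultilinearMap.compLinearMap_apply]
    simp only [hπU]
    exact hfU u
  have hΓ₀ {a : Fin (k + 1) → A} (ha : ∀ i, a i ∈ T ∪ U) : Γ₀ a = extendLast F (C a) := by
    by_cases hT : ∃ i, a i ∈ T
    · rw [hCT a hT, map_zero, hΓ₀_T hT.choose_spec]
    · lift a to Fin (k + 1) → U using fun i => (ha i).resolve_left (not_exists.1 hT i)
      exact hΓ₀_U a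
  have hΓ : IsCochain D (((k + 1).factorial : F)⁻¹ • antisymmetrize Γ₀) :=
    (isCochain_antisymmetrize (hf.compLinearMap hπD)).smul _
  refine ⟨_, hΓ, sub_eq_zero.1 ?_⟩
  have hdiff := (hΓ.sesq.compMultilinearMap (substLast_neg_mulVar DM)).sub hC.sesq
  refine hdiff.eq_zero_of_isGenerating hgen fun a ha => ?_
  rw [sub_apply, LinearMap.compMultilinearMap_apply, smul_apply, map_smul,
    hC.substLast_antisymmetrize fun σ => hΓ₀ fun i => ha (σ i),
    inv_smul_smul₀ (Nat.cast_ne_zero.2 (Nat.factorial_ne_zero _)), sub_self]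

end Bracket

/-! ### Cochains and brackets as coefficient families -/

section Coefficients

variable {F A M : Type*} [Field F] [AddCommGroup A] [Module F A] [AddCommGroup M] [Module F M]
  {L : LCA F A} {R : LCAMod F L M} {k : ℕ}

/-- The coefficient family of a multilinear map with polynomial values, which is how cochains and
brackets are recorded in `IsGamma` and `IsCBr`. -/
noncomputable def coeffs {ι κ : Type*} (Γ : MultilinearMap F (fun _ : ι => A) (LambdaPoly κ M)) :
    (ι → A) → (κ → ℕ) → M :=
  fun a => Γ a

@[simp]
lemma coeffs_apply {ι κ : Type*} (Γ : MultilinearMap F (fun _ : ι => A) (LambdaPoly κ M))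
    (a : ι → A) : coeffs Γ a = Γ a := rfl

lemma coeffs_injective {ι κ : Type*} : Function.Injective
    (coeffs : MultilinearMap F (fun _ : ι => A) (LambdaPoly κ M) → (ι → A) → (κ → ℕ) → M) :=
  fun _ _ h => MultilinearMap.ext fun a => DFunLike.coe_injective (congrFun h a)

lemma coeffs_sub {ι κ : Type*} (Γ Θ : MultilinearMap F (fun _ : ι => A) (LambdaPoly κ M)) :
    coeffs (Γ - Θ) = coeffs Γ - coeffs Θ := rfl

lemma exists_coeffs_eq {n m : ℕ} {c : (Fin n → A) → (Fin m → ℕ) → M}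
    (map_add : ∀ (a : Fin n → A) (i : Fin n) (x y : A), c (Function.update a i (x + y)) =
      c (Function.update a i x) + c (Function.update a i y))
    (map_smul : ∀ (a : Fin n → A) (i : Fin n) (r : F) (x : A),
      c (Function.update a i (r • x)) = r • c (Function.update a i x))
    (fin : ∀ a, (Function.support (c a)).Finite) :
    ∃ C : MultilinearMap F (fun _ : Fin n => A) (LambdaPoly (Fin m) M), coeffs C = c :=
  ⟨MultilinearMap.mk' (fun a => Finsupp.ofSupportFinite (c a) (fin a))
    (fun a i x y => DFunLike.coe_injective (map_add a i x y))
    (fun a i r x => DFunLike.coe_injective (map_smul a i r x)), rfl⟩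

lemma psiRaw_coeffs (Γ : MultilinearMap F (fun _ : Fin (k + 1) => A) (LambdaPoly (Fin (k + 1)) M)) :
    psiRaw R (coeffs Γ) = coeffs ((substLast R.D).compMultilinearMap Γ) := by
  ext a ν
  exact (substLast_apply R.D (Γ a) ν).symm

lemma totalDeriv_coeff (DM : Module.End F M) (f : LambdaPoly (Fin k) M) (ν : Fin k → ℕ) :
    totalDeriv DM f ν = DM (f ν) +
      ∑ i, if ν i = 0 then 0 else f (Function.update ν i (ν i - 1)) := by
  simp only [totalDeriv_apply, Finsupp.add_apply, mapCoeff_apply, Finsupp.finsetSum_apply,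
    mulVar_apply]

lemma GammaD_coeffs (Γ : MultilinearMap F (fun _ : Fin k => A) (LambdaPoly (Fin k) M)) :
    GammaD R (coeffs Γ) = coeffs ((totalDeriv R.D).compMultilinearMap Γ) := by
  ext a ν
  exact (totalDeriv_coeff R.D (Γ a) ν).symm

lemma neg_mulVar_coeff (i : Fin k) (f : LambdaPoly (Fin k) M) (ν : Fin k → ℕ) :
    (-mulVar F i) f ν = if ν i = 0 then 0 else -f (Function.update ν i (ν i - 1)) := by
  rw [LinearMap.neg_apply, Finsupp.neg_apply, mulVar_apply, neg_ite, neg_zero]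

theorem isGamma_coeffs_iff {Γ : MultilinearMap F (fun _ : Fin k => A) (LambdaPoly (Fin k) M)} :
    IsGamma R k (coeffs Γ) ↔ IsCochain L.D Γ := by
  constructor
  · refine fun h => ⟨fun a i => Finsupp.ext fun ν => ?_, fun a σ => Finsupp.ext fun ν => ?_⟩
    · rw [neg_mulVar_coeff]
      simpa using h.sesq a i (a i) ν
    · exact h.skew a ν σ
  · refine fun h => ⟨fun a i x y => ?_, fun a i r x => ?_, fun a => (Γ a).hasFiniteSupport,
      fun a i x ν => ?_, fun a ν σ => ?_⟩
    · exact congrArg DFunLike.coe (Γ.map_update_add a i x y)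
    · exact congrArg DFunLike.coe (Γ.map_update_smul a i r x)
    · have hsesq := DFunLike.congr_fun (h.sesq (Function.update a i x) i) ν
      rwa [neg_mulVar_coeff, Function.update_self, Function.update_idem] at hsesq
    · exact DFunLike.congr_fun (h.skew a σ) ν

theorem IsGamma.exists_isCochain {γ : (Fin k → A) → (Fin k → ℕ) → M} (hγ : IsGamma R k γ) :
    ∃ Γ, IsCochain L.D Γ ∧ coeffs Γ = γ := by
  obtain ⟨Γ, rfl⟩ := exists_coeffs_eq hγ.map_add hγ.map_smul hγ.fin
  exact ⟨Γ, isGamma_coeffs_iff.1 hγ, rfl⟩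

lemma permVars_extendLast_apply (σ : Equiv.Perm (Fin (k + 1))) (f : LambdaPoly (Fin k) M)
    (μ : Fin (k + 1) → ℕ) : permVars F σ (extendLast F f) μ =
      if μ (σ (Fin.last k)) = 0 then f (fun i => μ (σ i.castSucc)) else 0 :=
  extendLast_apply f (μ ∘ σ)

theorem IsCBr.exists_isBracket {c : (Fin (k + 1) → A) → (Fin k → ℕ) → M} (hc : IsCBr R k c) :
    ∃ C, IsBracket L.D R.D C ∧ coeffs C = c := by
  obtain ⟨C, rfl⟩ := exists_coeffs_eq hc.map_add hc.map_smul hc.fin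
  refine ⟨C, ⟨fun a i => Finsupp.ext fun ν => ?_, fun a σ => Finsupp.ext fun ν => ?_⟩, rfl⟩
  · refine Fin.lastCases ?_ (fun i => ?_) i
    · rw [bracketOp, Fin.snoc_last, totalDeriv_coeff]
      simpa using hc.sesq₂ a (a (Fin.last k)) ν
    · rw [bracketOp, Fin.snoc_castSucc, neg_mulVar_coeff]
      simpa using hc.sesq₁ a i (a i.castSucc) ν
  · rw [Units.smul_def, Finsupp.smul_apply, substLast_apply]
    simp only [permVars_extendLast_apply]
    exact hc.skew a ν σ

end Coefficients

end LCC

open LCC in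
/-- Suppose the Lie conformal algebra `A` decomposes, as an
`F[∂]`-module, as `A = T ⊕ (F[∂] ⊗ U)` with `T` the torsion and `F[∂] ⊗ U` a free
complementary submodule.  Then for every `k ≥ 1`, `ψ^k(Γ̃^k(A,M)) = C̄^k(A,M)`:
every `k`-`λ`-bracket vanishing on torsion elements is of the form `ψ^k(γ̃)` for
some basic cochain `γ̃ ∈ Γ̃^k(A,M)`.  Together with `Ker ψ^k = ∂Γ̃^k` this means that
`ψ^k` induces a bijective `F`-linear map `Γ^k(A,M) ≅ C̄^k(A,M)`. -/
theorem psi_onto_Cbar_of_decomposes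
    {F : Type*} [Field F] [CharZero F]
    {A M : Type*} [AddCommGroup A] [Module F A] [AddCommGroup M] [Module F M]
    (L : LCA F A) (R : LCAMod F L M) (hA : Decomposes L) (k₀ : ℕ) :
    (∀ c : (Fin (k₀+1) → A) → (Fin k₀ → ℕ) → M,
      IsCBr R k₀ c → VanishOnTorsion L c →
        ∃ γ : (Fin (k₀+1) → A) → (Fin (k₀+1) → ℕ) → M,
          IsGamma R (k₀+1) γ ∧ psiRaw R γ = c) ∧
    (∀ γ θ : (Fin (k₀+1) → A) → (Fin (k₀+1) → ℕ) → M,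
      IsGamma R (k₀+1) γ → IsGamma R (k₀+1) θ →
        (psiRaw R γ = psiRaw R θ ↔
          ∃ η, IsGamma R (k₀+1) η ∧ γ - θ = GammaD R η)) := by
  refine ⟨fun c hc hvanish => ?_, fun γ θ hγ hθ => ?_⟩
  · obtain ⟨C, hC, rfl⟩ := hc.exists_isBracket
    obtain ⟨U, π, hπT, hπU, hπD, hgen⟩ := hA.exists_projection
    have hCT (a : Fin (k₀ + 1) → A) (ha : ∃ i, IsTor L (a i)) : C a = 0 :=
      Finsupp.ext fun ν => hvanish a ν ha
    obtain ⟨Γ, hΓ, rfl⟩ := hC.exists_isCochain hCT hπT hπU hπD hgen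
    exact ⟨coeffs Γ, isGamma_coeffs_iff.2 hΓ, psiRaw_coeffs Γ⟩
  · obtain ⟨Γ, hΓ, rfl⟩ := hγ.exists_isCochain
    obtain ⟨Θ, hΘ, rfl⟩ := hθ.exists_isCochain
    rw [psiRaw_coeffs, psiRaw_coeffs, coeffs_injective.eq_iff, hΓ.substLast_comp_eq_iff hΘ]
    constructor
    · rintro ⟨H, hH, hΓΘ⟩
      exact ⟨coeffs H, isGamma_coeffs_iff.2 hH, by rw [GammaD_coeffs, ← hΓΘ, coeffs_sub]⟩
    · rintro ⟨η, hη, hΓΘ⟩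
      obtain ⟨H, hH, rfl⟩ := hη.exists_isCochain
      exact ⟨H, hH, coeffs_injective (hΓΘ.trans (GammaD_coeffs H))⟩
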